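/- Let Y_1, …, Y_n be i.i.d. random vectors in ℝ^p with E[Y_1] = 0 and covariance matrix I_p, where p ≤ n, and suppose E[Y_{1j}⁴] ≤ C for all coordinates j, for a constant C. Fix γ ⊆ {1,…,p} with p_γ = |γ| and a vector G ∈ ℝ^p. With T_k = Σ_{i=1}^k Y_i, T_{k,γ} the coordinate restriction of T_k to γ, S_k = ‖T_k‖² − ‖T_{k,γ}‖² + 2n GᵀT_k − k(p − p_γ), and martingale differences D_k = S_k − S_{k−1}, there is a constant C' depending only on C such that Σ_{k=1}^n E[D_k²] ≤ C'(n²p + n³‖G‖²). -/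

import Mathlib

open MeasureTheory ProbabilityTheory Filter

/-- Partial sum `T_k = Σ_{i ≤ k} Y_i` of the first `k` of `n` random vectors in `ℝ^p`,
realized on the canonical product space. -/
noncomputable def partialSumVec (n p : ℕ) (k : ℕ) (ω : Fin n → Fin p → ℝ) (j : Fin p) : ℝ :=
  ∑ i : Fin n, if (i : ℕ) < k then ω i j else 0

/-- The statistic `S_k = ‖T_k‖² − ‖T_{k,γ}‖² + 2n GᵀT_k − k(p − |γ|)` from the proof of
Lemma 3, where `T_{k,γ}` is the coordinate restriction of `T_k` to the model `γ`. -/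
noncomputable def quadStat (n p : ℕ) (γ : Finset (Fin p)) (G : Fin p → ℝ) (k : ℕ)
    (ω : Fin n → Fin p → ℝ) : ℝ :=
  (∑ j, (partialSumVec n p k ω j) ^ 2)
    - (∑ j, (if j ∈ γ then partialSumVec n p k ω j else 0) ^ 2)
    + 2 * n * (∑ j, G j * partialSumVec n p k ω j) - (k : ℝ) * ((p : ℝ) - γ.card)

/-!
Write `Y = Y_{k+1}`. Splitting off the last summand of `T_{k+1}` gives
`D_{k+1} = 2 ⟨U, Y⟩ + ∑ j ∉ γ, (Y_j² - 1)`, where `U = n G + T_k - T_{k,γ}` is independent of `Y`.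
Since `E[Y Yᵀ] = I`, the first term satisfies
`E ⟨U, Y⟩² = E ‖U‖² = n² ‖G‖² + k (p - |γ|)`, and by Cauchy-Schwarz the second one has second
moment at most `C (p - |γ|)²`.
-/

section SecondMoment

variable {Ω ι : Type*} [MeasurableSpace Ω] {P : Measure Ω}

lemma integral_sum_sq_of_pairwise_integral_mul_eq_zero {s : Finset ι} {X : ι → Ω → ℝ}
    (hX : ∀ i ∈ s, MemLp (X i) 2 P)
    (horth : (s : Set ι).Pairwise fun i j => ∫ ω, X i ω * X j ω ∂P = 0) :
    ∫ ω, (∑ i ∈ s, X i ω) ^ 2 ∂P = ∑ i ∈ s, ∫ ω, X i ω ^ 2 ∂P := by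
  have hint : ∀ i ∈ s, ∀ j ∈ s, Integrable (fun ω => X i ω * X j ω) P :=
    fun i hi j hj => (hX i hi).integrable_mul (hX j hj)
  simp_rw [sq, Finset.sum_mul_sum]
  rw [integral_finsetSum s fun i hi => integrable_finsetSum s (hint i hi)]
  refine Finset.sum_congr rfl fun i hi => ?_
  rw [integral_finsetSum s (hint i hi)]
  exact Finset.sum_eq_single_of_mem i hi fun j hj hji => horth hi hj hji.symm

lemma integral_sum_sq_le_card_mul {s : Finset ι} {X : ι → Ω → ℝ} {B : ℝ}
    (hX : ∀ i ∈ s, MemLp (X i) 2 P) (hB : ∀ i ∈ s, ∫ ω, X i ω ^ 2 ∂P ≤ B) :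
    ∫ ω, (∑ i ∈ s, X i ω) ^ 2 ∂P ≤ (s.card : ℝ) ^ 2 * B := by
  have hint : ∀ i ∈ s, Integrable (fun ω => X i ω ^ 2) P := fun i hi => (hX i hi).integrable_sq
  calc ∫ ω, (∑ i ∈ s, X i ω) ^ 2 ∂P
      ≤ ∫ ω, s.card * ∑ i ∈ s, X i ω ^ 2 ∂P :=
        integral_mono (memLp_finsetSum s hX).integrable_sq
          ((integrable_finsetSum s hint).const_mul _) fun _ => sq_sum_le_card_mul_sum_sq
    _ = s.card * ∑ i ∈ s, ∫ ω, X i ω ^ 2 ∂P := by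
        rw [integral_const_mul, integral_finsetSum s hint]
    _ ≤ s.card * (s.card • B) := by gcongr; exact Finset.sum_le_card_nsmul s _ _ hB
    _ = (s.card : ℝ) ^ 2 * B := by rw [nsmul_eq_mul]; ring

lemma integral_two_mul_add_sq_le {X Y : Ω → ℝ} (hX : MemLp X 2 P) (hY : MemLp Y 2 P) :
    ∫ ω, (2 * X ω + Y ω) ^ 2 ∂P ≤ 8 * ∫ ω, X ω ^ 2 ∂P + 2 * ∫ ω, Y ω ^ 2 ∂P := by
  have hX' := hX.integrable_sq.const_mul 8
  have hY' := hY.integrable_sq.const_mul 2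
  rw [← integral_const_mul, ← integral_const_mul, ← integral_add hX' hY']
  refine integral_mono ((hX.const_mul 2).add hY).integrable_sq (hX'.add hY') fun ω => ?_
  change (2 * X ω + Y ω) ^ 2 ≤ 8 * X ω ^ 2 + 2 * Y ω ^ 2
  linarith [sq_nonneg (2 * X ω - Y ω)]

lemma memLp_mul_of_indepFun {X Y : Ω → ℝ} (hX : MemLp X 2 P) (hY : MemLp Y 2 P)
    (hXY : IndepFun X Y P) : MemLp (fun ω => X ω * Y ω) 2 P := by
  refine (memLp_two_iff_integrable_sq (f := fun ω => X ω * Y ω)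
    (hX.aestronglyMeasurable.mul hY.aestronglyMeasurable)).2 ?_
  simp_rw [mul_pow]
  exact (hXY.comp (measurable_id.pow_const 2) (measurable_id.pow_const 2)).integrable_mul
    hX.integrable_sq hY.integrable_sq

lemma memLp_sum_mul_of_indepFun [Fintype ι] {X Y : Ω → ι → ℝ}
    (hX : ∀ j, MemLp (fun ω => X ω j) 2 P) (hY : ∀ j, MemLp (fun ω => Y ω j) 2 P)
    (hXY : IndepFun X Y P) : MemLp (fun ω => ∑ j, X ω j * Y ω j) 2 P :=
  memLp_finsetSum _ fun j _ => memLp_mul_of_indepFun (hX j) (hY j)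
    (hXY.comp (measurable_pi_apply j) (measurable_pi_apply j))

lemma integral_sum_sq_of_pairwise_indepFun {s : Finset ι} {X : ι → Ω → ℝ}
    (hX : ∀ i ∈ s, MemLp (X i) 2 P) (hmean : ∀ i ∈ s, ∫ ω, X i ω ∂P = 0)
    (hindep : (s : Set ι).Pairwise fun i j => IndepFun (X i) (X j) P) :
    ∫ ω, (∑ i ∈ s, X i ω) ^ 2 ∂P = ∑ i ∈ s, ∫ ω, X i ω ^ 2 ∂P :=
  integral_sum_sq_of_pairwise_integral_mul_eq_zero hX fun i hi j hj hij =>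
    ((hindep hi hj hij).integral_fun_mul_eq_mul_integral (hX i hi).aestronglyMeasurable
      (hX j hj).aestronglyMeasurable).trans (by rw [hmean i hi, zero_mul])

lemma memLp_sq_sub_const [IsFiniteMeasure P] {X : Ω → ℝ} (hX : AEStronglyMeasurable X P)
    (hX4 : Integrable (fun ω => X ω ^ 4) P) (c : ℝ) : MemLp (fun ω => X ω ^ 2 - c) 2 P := by
  have hsq : MemLp (fun ω => X ω ^ 2) 2 P := by
    refine (memLp_two_iff_integrable_sq (f := fun ω => X ω ^ 2) (hX.pow 2)).2 ?_
    simpa only [← pow_mul] using hX4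
  exact hsq.sub (memLp_const c)

variable [IsProbabilityMeasure P] {X : Ω → ℝ}

lemma integral_const_add_sq_of_integral_eq_zero (hX : MemLp X 2 P) (hmean : ∫ ω, X ω ∂P = 0)
    (c : ℝ) : ∫ ω, (c + X ω) ^ 2 ∂P = c ^ 2 + ∫ ω, X ω ^ 2 ∂P := by
  have hlin : Integrable (fun ω => 2 * c * X ω) P := (hX.integrable one_le_two).const_mul _
  have haff : Integrable (fun ω => c ^ 2 + 2 * c * X ω) P := (integrable_const _).add hlin
  simp_rw [add_sq]
  rw [integral_add haff hX.integrable_sq, integral_add (integrable_const _) hlin,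
    integral_const_mul, hmean]
  simp

lemma integral_sq_sub_one_sq_of_integral_sq_eq_one (hX : ∫ ω, X ω ^ 2 ∂P = 1)
    (hX2 : Integrable (fun ω => X ω ^ 2) P) (hX4 : Integrable (fun ω => X ω ^ 4) P) :
    ∫ ω, (X ω ^ 2 - 1) ^ 2 ∂P = ∫ ω, X ω ^ 4 ∂P - 1 := by
  have hexp : ∀ ω, (X ω ^ 2 - 1) ^ 2 = X ω ^ 4 - 2 * X ω ^ 2 + 1 := fun ω => by ring
  have hdiff : Integrable (fun ω => X ω ^ 4 - 2 * X ω ^ 2) P := hX4.sub (hX2.const_mul 2)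
  simp_rw [hexp]
  rw [integral_add hdiff (integrable_const 1), integral_sub hX4 (hX2.const_mul 2),
    integral_const_mul, hX]
  simp
  ring

end SecondMoment

/-- A random vector `Y` is *isotropic* if `E[Y Yᵀ]` is the identity matrix; for centered `Y` this
says that its covariance matrix is the identity. Square integrability of the coordinates is included
so that the integrals are meaningful. -/
structure IsIsotropic {Ω ι : Type*} [MeasurableSpace Ω] (Y : Ω → ι → ℝ) (P : Measure Ω) :
    Prop where
  memLp : ∀ j, MemLp (fun ω => Y ω j) 2 P
  integral_sq : ∀ j, ∫ ω, Y ω j ^ 2 ∂P = 1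
  integral_mul : ∀ ⦃j l⦄, j ≠ l → ∫ ω, Y ω j * Y ω l ∂P = 0

namespace IsIsotropic

variable {Ω ι κ : Type*} [MeasurableSpace Ω] {P : Measure Ω}

lemma aemeasurable [Countable ι] {Y : Ω → ι → ℝ} (hY : IsIsotropic Y P) : AEMeasurable Y P :=
  aemeasurable_pi_lambda Y fun j => (hY.memLp j).aemeasurable

lemma of_integral_mul_eq_ite [DecidableEq ι] {Y : Ω → ι → ℝ}
    (hmeas : ∀ j, AEStronglyMeasurable (fun ω => Y ω j) P)
    (hint : ∀ j, Integrable (fun ω => Y ω j * Y ω j) P)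
    (h : ∀ j l, ∫ ω, Y ω j * Y ω l ∂P = if j = l then 1 else 0) : IsIsotropic Y P where
  memLp j := (memLp_two_iff_integrable_sq (hmeas j)).2 (by simpa only [sq] using hint j)
  integral_sq j := by simpa only [sq, if_true] using h j j
  integral_mul j l hjl := (h j l).trans (if_neg hjl)

lemma comp_eval [Fintype κ] {𝓧 : κ → Type*} [∀ i, MeasurableSpace (𝓧 i)]
    {μ : ∀ i, Measure (𝓧 i)} [∀ i, IsProbabilityMeasure (μ i)] {i : κ} {X : 𝓧 i → ι → ℝ}
    (hX : IsIsotropic X (μ i)) : IsIsotropic (fun x : ∀ i, 𝓧 i => X (x i)) (Measure.pi μ) where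
  memLp j := (hX.memLp j).comp_measurePreserving (measurePreserving_eval μ i)
  integral_sq j := (integral_comp_eval (hX.memLp j).integrable_sq.aestronglyMeasurable).trans
    (hX.integral_sq j)
  integral_mul j l hjl :=
    (integral_comp_eval ((hX.memLp j).integrable_mul (hX.memLp l)).aestronglyMeasurable).trans
      (hX.integral_mul hjl)

lemma integral_sum_mul_sq [Fintype ι] {U Y : Ω → ι → ℝ} (hY : IsIsotropic Y P)
    (hU : ∀ j, MemLp (fun ω => U ω j) 2 P) (hUY : IndepFun U Y P) :
    ∫ ω, (∑ j, U ω j * Y ω j) ^ 2 ∂P = ∑ j, ∫ ω, U ω j ^ 2 ∂P := by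
  have hfactor : ∀ j l, ∫ ω, (U ω j * Y ω j) * (U ω l * Y ω l) ∂P
      = (∫ ω, U ω j * U ω l ∂P) * ∫ ω, Y ω j * Y ω l ∂P := fun j l => by
    have hind : IndepFun (fun ω => U ω j * U ω l) (fun ω => Y ω j * Y ω l) P :=
      hUY.comp (φ := fun u : ι → ℝ => u j * u l) (ψ := fun y : ι → ℝ => y j * y l)
         (by fun_prop) (by fun_prop)
    simp_rw [mul_mul_mul_comm (U _ j)]
    exact hind.integral_fun_mul_eq_mul_integral
      ((hU j).integrable_mul (hU l)).aestronglyMeasurable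
      ((hY.memLp j).integrable_mul (hY.memLp l)).aestronglyMeasurable
  rw [integral_sum_sq_of_pairwise_integral_mul_eq_zero
    (fun j _ => memLp_mul_of_indepFun (hU j) (hY.memLp j)
      (hUY.comp (measurable_pi_apply j) (measurable_pi_apply j)))
    fun j _ l _ hjl => by simp only [hfactor, hY.integral_mul hjl, mul_zero]]
  refine Finset.sum_congr rfl fun j _ => ?_
  have hsq := hfactor j j
  simp_rw [← sq] at hsq
  rw [hsq, hY.integral_sq, mul_one]

end IsIsotropic

section QuadStat

variable {n p : ℕ}

lemma partialSumVec_val (i : Fin n) (ω : Fin n → Fin p → ℝ) :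
    partialSumVec n p i ω = ∑ m ∈ Finset.Iio i, ω m := by
  ext j
  simp [partialSumVec, ← Finset.sum_filter, Finset.sum_apply, ← Finset.filter_gt_eq_Iio]

lemma partialSumVec_val_succ (i : Fin n) (ω : Fin n → Fin p → ℝ) :
    partialSumVec n p (i + 1) ω = partialSumVec n p i ω + ω i := by
  rw [partialSumVec_val, Finset.sum_Iio_add_eq_sum_Iic]
  ext j
  simp [partialSumVec, ← Finset.sum_filter, Finset.sum_apply, ← Finset.filter_ge_eq_Iic]

lemma quadStat_eq_sum_compl (γ : Finset (Fin p)) (G : Fin p → ℝ) (k : ℕ)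
    (ω : Fin n → Fin p → ℝ) :
    quadStat n p γ G k ω = ∑ j ∈ γᶜ, (partialSumVec n p k ω j ^ 2 - k)
      + 2 * n * ∑ j, G j * partialSumVec n p k ω j := by
  have hsplit := Finset.sum_add_sum_compl γ fun j => partialSumVec n p k ω j ^ 2
  have hcard : ((γᶜ.card : ℕ) : ℝ) = p - γ.card := by
    rw [Finset.card_compl, Fintype.card_fin, Nat.cast_sub (card_finset_fin_le γ)]
  simp only [quadStat, ite_pow, ne_eq, OfNat.ofNat_ne_zero, not_false_eq_true, zero_pow,
    Finset.sum_ite_mem, Finset.univ_inter, Finset.sum_sub_distrib, Finset.sum_const, nsmul_eq_mul,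
    hcard]
  linarith

/-- The vector `U_k = n G + T_k - T_{k,γ}`, a function of `Y_1, …, Y_k`, for which `2 U_kᵀ Y_{k+1}`
is the part of the difference `D_{k+1}` that is linear in `Y_{k+1}`. -/
noncomputable def linearCoeff (n p : ℕ) (γ : Finset (Fin p)) (G : Fin p → ℝ) (k : ℕ)
    (ω : Fin n → Fin p → ℝ) (j : Fin p) : ℝ :=
  n * G j + if j ∈ γᶜ then partialSumVec n p k ω j else 0

lemma quadStat_succ_sub (γ : Finset (Fin p)) (G : Fin p → ℝ) (i : Fin n)
    (ω : Fin n → Fin p → ℝ) :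
    quadStat n p γ G (i + 1) ω - quadStat n p γ G i ω
      = 2 * ∑ j, linearCoeff n p γ G i ω j * ω i j + ∑ j ∈ γᶜ, (ω i j ^ 2 - 1) := by
  set T := partialSumVec n p i ω with hT
  have hinner : ∑ j, linearCoeff n p γ G i ω j * ω i j
      = n * ∑ j, G j * ω i j + ∑ j ∈ γᶜ, T j * ω i j := by
    simp only [linearCoeff, add_mul, ite_mul, zero_mul, Finset.sum_add_distrib, Finset.sum_ite_mem,
      Finset.univ_inter, Finset.mul_sum, mul_assoc, hT]
  have hsq : ∑ j ∈ γᶜ, ((T j + ω i j) ^ 2 - (i + 1 : ℝ))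
      = ∑ j ∈ γᶜ, (T j ^ 2 - i) + 2 * ∑ j ∈ γᶜ, T j * ω i j + ∑ j ∈ γᶜ, (ω i j ^ 2 - 1) := by
    rw [Finset.mul_sum, ← Finset.sum_add_distrib, ← Finset.sum_add_distrib]
    exact Finset.sum_congr rfl fun j _ => by ring
  simp only [quadStat_eq_sum_compl, partialSumVec_val_succ, ← hT, Pi.add_apply, Nat.cast_add,
    Nat.cast_one, hsq, hinner, mul_add, Finset.sum_add_distrib]
  ring

variable {Ω : Type*} [MeasurableSpace Ω] {P : Measure Ω} {Y : Fin n → Ω → Fin p → ℝ}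

lemma indepFun_linearCoeff (hindep : iIndepFun Y P) (hmeas : ∀ i, AEMeasurable (Y i) P)
    (γ : Finset (Fin p)) (G : Fin p → ℝ) (i : Fin n) :
    IndepFun (fun ω => linearCoeff n p γ G i (Y · ω)) (Y i) P := by
  have hsum : IndepFun (∑ m ∈ Finset.Iio i, Y m) (Y i) P :=
    hindep.indepFun_finsetSum_of_notMem₀ hmeas Finset.notMem_Iio_self
  have hφ : Measurable fun (t : Fin p → ℝ) (j : Fin p) => n * G j + if j ∈ γᶜ then t j else 0 :=
    measurable_pi_lambda _ fun j => by split_ifs <;> fun_prop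
  convert! hsum.comp hφ measurable_id using 1
  ext ω j
  simp [linearCoeff, partialSumVec_val]

lemma memLp_linearCoeff [IsFiniteMeasure P] (hY : ∀ i j, MemLp (fun ω => Y i ω j) 2 P)
    (γ : Finset (Fin p)) (G : Fin p → ℝ) (i : Fin n) (j : Fin p) :
    MemLp (fun ω => linearCoeff n p γ G i (Y · ω) j) 2 P := by
  simp only [linearCoeff, partialSumVec_val, Finset.sum_apply]
  refine (memLp_const (n * G j)).add ?_
  split_ifs
  · exact memLp_finsetSum _ fun m _ => hY m j
  · exact MemLp.zero

variable [IsProbabilityMeasure P] (γ : Finset (Fin p)) (G : Fin p → ℝ) (i : Fin n)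

lemma integral_linearCoeff_sq (hY : ∀ i, IsIsotropic (Y i) P) (hindep : iIndepFun Y P)
    (hmean : ∀ i j, ∫ ω, Y i ω j ∂P = 0) (j : Fin p) :
    ∫ ω, linearCoeff n p γ G i (Y · ω) j ^ 2 ∂P
      = (n : ℝ) ^ 2 * G j ^ 2 + if j ∈ γᶜ then (i : ℝ) else 0 := by
  by_cases hj : j ∈ γᶜ
  swap
  · simp [linearCoeff, hj, mul_pow]
  have hsum : MemLp (fun ω => ∑ m ∈ Finset.Iio i, Y m ω j) 2 P :=
    memLp_finsetSum _ fun m _ => (hY m).memLp j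
  have hsum_mean : ∫ ω, ∑ m ∈ Finset.Iio i, Y m ω j ∂P = 0 := by
    rw [integral_finsetSum _ fun m _ => ((hY m).memLp j).integrable one_le_two]
    exact Finset.sum_eq_zero fun m _ => hmean m j
  simp only [linearCoeff, hj, if_true, partialSumVec_val, Finset.sum_apply]
  rw [integral_const_add_sq_of_integral_eq_zero hsum hsum_mean,
    integral_sum_sq_of_pairwise_indepFun (fun m _ => (hY m).memLp j) (fun m _ => hmean m j)
      fun m _ l _ hml =>
        (hindep.indepFun hml).comp (measurable_pi_apply j) (measurable_pi_apply j)]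
  simp [(hY _).integral_sq, mul_pow]

lemma sum_integral_linearCoeff_sq (hY : ∀ i, IsIsotropic (Y i) P) (hindep : iIndepFun Y P)
    (hmean : ∀ i j, ∫ ω, Y i ω j ∂P = 0) :
    ∑ j, ∫ ω, linearCoeff n p γ G i (Y · ω) j ^ 2 ∂P
      = (n : ℝ) ^ 2 * ∑ j, G j ^ 2 + i * γᶜ.card := by
  simp only [integral_linearCoeff_sq γ G i hY hindep hmean, Finset.sum_add_distrib, Finset.mul_sum,
    Finset.sum_ite_mem, Finset.univ_inter, Finset.sum_const, nsmul_eq_mul, mul_comm]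

lemma integral_quadStat_succ_sub_sq_le {C : ℝ} (hY : ∀ i, IsIsotropic (Y i) P)
    (hindep : iIndepFun Y P) (hmean : ∀ i j, ∫ ω, Y i ω j ∂P = 0)
    (hint : ∀ j, Integrable (fun ω => Y i ω j ^ 4) P) (hC : ∀ j, ∫ ω, Y i ω j ^ 4 ∂P ≤ C) :
    ∫ ω, (quadStat n p γ G (i + 1) (Y · ω) - quadStat n p γ G i (Y · ω)) ^ 2 ∂P
      ≤ 8 * ((n : ℝ) ^ 2 * ∑ j, G j ^ 2 + i * γᶜ.card) + 2 * ((γᶜ.card : ℝ) ^ 2 * C) := by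
  have hU := memLp_linearCoeff (fun i => (hY i).memLp) γ G i
  have hUY := indepFun_linearCoeff hindep (fun i => (hY i).aemeasurable) γ G i
  have hQ : ∀ j, MemLp (fun ω => Y i ω j ^ 2 - 1) 2 P := fun j =>
    memLp_sq_sub_const ((hY i).memLp j).aestronglyMeasurable (hint j) 1
  have hQC : ∀ j, ∫ ω, (Y i ω j ^ 2 - 1) ^ 2 ∂P ≤ C := fun j => by
    rw [integral_sq_sub_one_sq_of_integral_sq_eq_one ((hY i).integral_sq j)
      ((hY i).memLp j).integrable_sq (hint j)]
    linarith [hC j]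
  simp_rw [quadStat_succ_sub]
  refine (integral_two_mul_add_sq_le (memLp_sum_mul_of_indepFun hU (hY i).memLp hUY)
    (memLp_finsetSum _ fun j _ => hQ j)).trans ?_
  rw [(hY i).integral_sum_mul_sq hU hUY, sum_integral_linearCoeff_sq γ G i hY hindep hmean]
  gcongr
  exact integral_sum_sq_le_card_mul (fun j _ => hQ j) fun j _ => hQC j

theorem sum_sq_martingale_differences_bound_general {C : ℝ} (hY : ∀ i, IsIsotropic (Y i) P)
    (hindep : iIndepFun Y P) (hmean : ∀ i j, ∫ ω, Y i ω j ∂P = 0)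
    (hint : ∀ i j, Integrable (fun ω => Y i ω j ^ 4) P) (hC : ∀ i j, ∫ ω, Y i ω j ^ 4 ∂P ≤ C) :
    ∑ k ∈ Finset.range n,
        ∫ ω, (quadStat n p γ G (k + 1) (Y · ω) - quadStat n p γ G k (Y · ω)) ^ 2 ∂P
      ≤ 8 * ((n : ℝ) ^ 2 * γᶜ.card + (n : ℝ) ^ 3 * ∑ j, G j ^ 2)
        + 2 * C * (n * (γᶜ.card : ℝ) ^ 2) := by
  rw [Finset.sum_range]
  calc _ ≤ ∑ _i : Fin n, (8 * ((n : ℝ) ^ 2 * ∑ j, G j ^ 2 + n * γᶜ.card)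
        + 2 * ((γᶜ.card : ℝ) ^ 2 * C)) := by
        refine Finset.sum_le_sum fun i _ => (integral_quadStat_succ_sub_sq_le γ G i hY hindep
          hmean (hint i) (hC i)).trans ?_
        gcongr
        exact i.is_le'
    _ = _ := by
        rw [Finset.sum_const, Finset.card_univ, Fintype.card_fin, nsmul_eq_mul]
        ring

end QuadStat

/-- **Second-moment bound in the proof of Lemma 3**: for i.i.d. mean-zero,
identity-covariance random vectors in `ℝ^p` (`p ≤ n`) with coordinatewise fourth moments
bounded by `C`, the martingale differences `D_k = S_k − S_{k-1}` satisfy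
`Σ_{k=1}^n E[D_k²] ≤ C'(n²p + n³‖G‖²)` for a constant `C'` depending only on `C`. -/
theorem sum_sq_martingale_differences_bound (C : ℝ) (hC : 0 ≤ C) :
    ∃ C' : ℝ, 0 < C' ∧
      ∀ (n p : ℕ), 0 < p → p ≤ n →
      ∀ (μ : Measure (Fin p → ℝ)), IsProbabilityMeasure μ →
      (∀ j, Integrable (fun y => y j) μ) →
      (∀ j, ∫ y, y j ∂μ = 0) →
      (∀ j l, Integrable (fun y => y j * y l) μ) →
      (∀ j l, ∫ y, y j * y l ∂μ = if j = l then (1 : ℝ) else 0) →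
      (∀ j, Integrable (fun y => (y j) ^ 4) μ) →
      (∀ j, ∫ y, (y j) ^ 4 ∂μ ≤ C) →
      ∀ (γ : Finset (Fin p)) (G : Fin p → ℝ),
        (∑ k ∈ Finset.range n,
            ∫ ω, (quadStat n p γ G (k + 1) ω - quadStat n p γ G k ω) ^ 2
              ∂(Measure.pi fun _ : Fin n => μ))
          ≤ C' * ((n : ℝ) ^ 2 * p + (n : ℝ) ^ 3 * ∑ j, (G j) ^ 2) := by
  refine ⟨8 + 2 * C, by positivity, fun n p _ hpn μ _ h1 hmean h2 hcov h4 hC4 γ G => ?_⟩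
  have hiso (i : Fin n) : IsIsotropic (fun ω : Fin n → Fin p → ℝ => ω i)
      (Measure.pi fun _ => μ) :=
    .comp_eval (μ := fun _ => μ) (X := fun y => y) <|
      .of_integral_mul_eq_ite (fun j => (h1 j).aestronglyMeasurable) (fun j => h2 j j) hcov
  have hindep : iIndepFun (fun (i : Fin n) (ω : Fin n → Fin p → ℝ) => ω i)
      (Measure.pi fun _ => μ) := iIndepFun_pi (X := fun _ => id) fun _ => aemeasurable_id
  have hγ : (γᶜ.card : ℝ) ≤ p := by exact_mod_cast card_finset_fin_le γᶜ
  have hγn : (γᶜ.card : ℝ) ≤ n := hγ.trans (by exact_mod_cast hpn)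
  have heval {f : (Fin p → ℝ) → ℝ} (hf : Integrable f μ) (i : Fin n) :
      ∫ ω, f (ω i) ∂(Measure.pi fun _ : Fin n => μ) = ∫ y, f y ∂μ :=
    integral_comp_eval (μ := fun _ => μ) hf.aestronglyMeasurable
  refine (sum_sq_martingale_differences_bound_general (C := C) γ G hiso hindep
    (fun i j => (heval (h1 j) i).trans (hmean j))
    (fun i j => integrable_comp_eval (μ := fun _ => μ) (i := i) (h4 j))
    fun i j => (heval (h4 j) i).trans_le (hC4 j)).trans ?_
  calc 8 * ((n : ℝ) ^ 2 * γᶜ.card + (n : ℝ) ^ 3 * ∑ j, G j ^ 2)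
        + 2 * C * (n * (γᶜ.card : ℝ) ^ 2)
      ≤ 8 * ((n : ℝ) ^ 2 * p + (n : ℝ) ^ 3 * ∑ j, G j ^ 2) + 2 * C * (n * (n * p)) := by
        rw [sq (γᶜ.card : ℝ)]
        gcongr
    _ ≤ (8 + 2 * C) * ((n : ℝ) ^ 2 * p + (n : ℝ) ^ 3 * ∑ j, G j ^ 2) := by
        have hG : 0 ≤ 2 * C * ((n : ℝ) ^ 3 * ∑ j, G j ^ 2) := by positivity
        linarith
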